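/- Let M be a finitely generated free O_K-module of rank r, equipped with a ℤ_p-algebra homomorphism ι : O_F → End_{O_K}(M), and assume that at most e of the embeddings τ : F → K satisfy M_{K,τ} ≠ 0. Let r_1 ≥ r_2 ≥ … ≥ r_e ≥ 0 be the decreasing rearrangement of the family (r_τ)_τ, padded with zeros (so r = r_1 + … + r_e). Let M̄ := M ⊗_{O_K} κ with the endomorphism induced by ι(π), and for j ≥ 0 let M̄[π^j] denote the kernel of the j-th power of this endomorphism. Then the following are equivalent: (i) there is an isomorphism M/ι(π)(M) ≅ ⊕_{j=1}^{r} O_K/c_jO_K with nonzero c_j ∈ O_K satisfying v(c_j) = (1/e)·#{1 ≤ i ≤ e : r_i ≥ j} for every 1 ≤ j ≤ r; (ii) dim_κ (M̄[π^j]/M̄[π^{j-1}]) = r_j for every 1 ≤ j ≤ e. -/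

import Mathlib

/-!
STATEMENT 7 (Proposition 4.10, module-theoretic form): with `r_1 ≥ … ≥ r_e` the decreasing
rearrangement of `(r_τ)_τ` padded with zeros, the elementary divisors of `M/ι(π)M` have
valuations `v(c_j) = (1/e)·#{i : r_i ≥ j}` if and only if
`dim_κ(M̄[π^j]/M̄[π^{j-1}]) = r_j` for every `1 ≤ j ≤ e`.
-/

set_option synthInstance.maxHeartbeats 1000000
set_option maxHeartbeats 1000000

open scoped TensorProduct

/-- The eigenspace `M_{K,τ} = {w ∈ M ⊗_{O_K} K | ι(a) w = τ(a) • w for all a ∈ O_F}`. -/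
noncomputable def eigenspaceOF {p : ℕ} [Fact p.Prime] {K : Type*} [Field K] [Algebra ℚ_[p] K]
    (A : ValuationSubring K) {F : Type*} [Field F] [Algebra ℚ_[p] F] (OF : Subring F)
    {M : Type*} [AddCommGroup M] [Module A M] (ι : OF →+* Module.End A M)
    (τ : F →ₐ[ℚ_[p]] K) : Submodule K (K ⊗[A] M) :=
  ⨅ a : OF, LinearMap.ker ((ι a).baseChange K - τ (a : F) • LinearMap.id)

/-!
Intersecting `M` with the partial sums of the eigenspaces, taken in order of decreasing dimension,
gives a filtration `W` of `M` with free graded pieces of rank `r i`, on which `φ = ι(π)` acts by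
scalars `a i` of equal valuation. Since `φ - a 0` kills `W 1`, it factors as `ψ ∘ q` through
`q : M → M' = M / W 1`, and modulo the maximal ideal `φ` itself becomes `ψ ∘ q`. Both conditions
are equivalent to the same condition for `M'` together with injectivity of `ψ` modulo the maximal
ideal:

* the kernels of the powers of `φ` on `M ⊗ κ` have the expected dimensions if and only if
  `ker φ = ker q` there and the same holds for `M'`;
* if `ψ` is injective modulo the maximal ideal, it splits, and `M / φ M → M' / φ' M'` has kernel
  exactly the `a 0`-torsion, so each nontrivial elementary divisor loses the factor `a 0`.
  Conversely, `ψ` carries a basis of the first step of the filtration of `M'` to a part of a basis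
  of `W 1` modulo the maximal ideal, which allows a cyclic decomposition of `M' / φ' M'` to be
  lifted to one of `M / φ M`.
-/

open IsLocalRing Module

section CyclicDecomposition

variable {R J N N' : Type*} [CommRing R] [Fintype J] [AddCommGroup N] [Module R N]
  [AddCommGroup N'] [Module R N'] {x : J → N} {d : J → R}

/-- `x` exhibits `N` as the direct sum of cyclic modules `R ⧸ (d j)`, the `j`-th summand being
generated by `x j`. Some of the `d j` may be units, so that `x j = 0` is allowed. -/
structure IsCyclicDecomposition (x : J → N) (d : J → R) : Prop where
  span_eq_top : Submodule.span R (Set.range x) = ⊤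
  sum_smul_eq_zero_iff (α : J → R) : ∑ j, α j • x j = 0 ↔ ∀ j, d j ∣ α j

namespace IsCyclicDecomposition

theorem exists_sum_smul_eq (h : IsCyclicDecomposition x d) (y : N) :
    ∃ α : J → R, ∑ j, α j • x j = y :=
  (Submodule.mem_span_range_iff_exists_fun R).1 (h.span_eq_top ▸ Submodule.mem_top)

theorem eq_zero_of_isUnit (h : IsCyclicDecomposition x d) {j : J} (hj : IsUnit (d j)) :
    x j = 0 := by
  classical
  have hsum := (h.sum_smul_eq_zero_iff (Pi.single j 1)).2 fun i => by
    obtain rfl | hi := eq_or_ne i j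
    · exact hj.dvd
    · simp [hi]
  simpa [Pi.single_apply, ite_smul] using hsum

theorem nonempty_linearEquiv_iff :
    Nonempty (N ≃ₗ[R] ((j : J) → R ⧸ Ideal.span {d j})) ↔
      ∃ x : J → N, IsCyclicDecomposition x d := by
  classical
  constructor
  · rintro ⟨Ψ⟩
    have hΨ (α : J → R) : Ψ (∑ j, α j • Ψ.symm (Pi.single j 1)) =
        fun j => Ideal.Quotient.mk (Ideal.span {d j}) (α j) := by
      ext i
      simp only [map_sum, map_smul, LinearEquiv.apply_symm_apply, Finset.sum_apply, Pi.smul_apply]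
      rw [Finset.sum_eq_single i (fun j _ hj => by rw [Pi.single_eq_of_ne hj.symm, smul_zero])
        (by simp), Pi.single_eq_same, Algebra.smul_def, mul_one, Ideal.Quotient.algebraMap_eq]
    refine ⟨fun j => Ψ.symm (Pi.single j 1), eq_top_iff.2 fun y _ => ?_, fun α => ?_⟩
    · choose α hα using fun j => Ideal.Quotient.mk_surjective (Ψ y j)
      exact (Submodule.mem_span_range_iff_exists_fun R).2
        ⟨α, Ψ.injective ((hΨ α).trans (funext hα))⟩
    · rw [← Ψ.map_eq_zero_iff, hΨ, funext_iff]
      simp only [Pi.zero_apply, Ideal.Quotient.eq_zero_iff_mem, Ideal.mem_span_singleton]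
  · rintro ⟨x, hx⟩
    have hker : LinearMap.ker (Fintype.linearCombination R x) =
        Submodule.pi Set.univ fun j => Ideal.span {d j} := by
      ext α
      simp only [LinearMap.mem_ker, Fintype.linearCombination_apply, hx.sum_smul_eq_zero_iff,
        Submodule.mem_pi, Set.mem_univ, true_imp_iff, Ideal.mem_span_singleton]
    exact ⟨((Fintype.linearCombination R x).quotKerEquivOfSurjective hx.exists_sum_smul_eq).symm ≪≫ₗ
      Submodule.quotEquivOfEq _ _ hker ≪≫ₗ Submodule.quotientPi _⟩

theorem congr (h : IsCyclicDecomposition x d) {d' : J → R} (hd : ∀ j, Associated (d j) (d' j)) :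
    IsCyclicDecomposition x d' where
  span_eq_top := h.span_eq_top
  sum_smul_eq_zero_iff α := by
    simp only [h.sum_smul_eq_zero_iff, (hd _).dvd_iff_dvd_left]

theorem map (h : IsCyclicDecomposition x d) {g : N →ₗ[R] N'} (hg : Function.Surjective g) {a : R}
    (hker : ∀ y, g y = 0 ↔ a • y = 0) {d' : J → R} (hd : ∀ j α, d j ∣ a * α ↔ d' j ∣ α) :
    IsCyclicDecomposition (g ∘ x) d' where
  span_eq_top := by
    rw [Set.range_comp, Submodule.span_image, h.span_eq_top, Submodule.map_top,
      LinearMap.range_eq_top.2 hg]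
  sum_smul_eq_zero_iff α := by
    simp only [← hd, ← h.sum_smul_eq_zero_iff, mul_smul, ← Finset.smul_sum, ← hker, map_sum,
      map_smul, Function.comp_apply]

theorem of_comp {g : N →ₗ[R] N'} (h : IsCyclicDecomposition (g ∘ x) d) {c : J → R}
    (hker : LinearMap.ker g ≤ Submodule.span R (Set.range fun j => d j • x j))
    (hrel : ∀ β : J → R, ∑ j, β j • d j • x j = 0 ↔ ∀ j, c j ∣ β j) :
    IsCyclicDecomposition x fun j => c j * d j where
  span_eq_top := by
    refine eq_top_iff.2 fun y _ => ?_
    obtain ⟨α, hα⟩ := h.exists_sum_smul_eq (g y)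
    have hsum : ∑ j, α j • x j ∈ Submodule.span R (Set.range x) :=
      Submodule.sum_mem _ fun j _ => Submodule.smul_mem _ _ (Submodule.subset_span ⟨j, rfl⟩)
    have hdiff : y - ∑ j, α j • x j ∈ Submodule.span R (Set.range x) := by
      refine (hker.trans (Submodule.span_le.2 ?_))
        (show g _ = 0 by simpa [sub_eq_zero] using hα.symm)
      rintro _ ⟨j, rfl⟩
      exact Submodule.smul_mem _ _ (Submodule.subset_span ⟨j, rfl⟩)
    exact sub_add_cancel y _ ▸ add_mem hdiff hsum
  sum_smul_eq_zero_iff α := by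
    constructor
    · intro hα
      have hgα := (h.sum_smul_eq_zero_iff α).1 (by simpa using congr(g $hα))
      choose β hβ using hgα
      have hcβ := (hrel β).1 (by simpa only [hβ, mul_comm (d _), mul_smul] using hα)
      exact fun j => hβ j ▸ mul_comm (c j) (d j) ▸ mul_dvd_mul_left _ (hcβ j)
    · intro hα
      choose γ hγ using hα
      have hcγ := (hrel fun j => c j * γ j).2 fun j => dvd_mul_right _ _
      simpa only [hγ, mul_right_comm (c _) (d _), mul_smul _ (d _)] using hcγ

end IsCyclicDecomposition

variable [IsLocalRing R]

theorem finrank_residueField_tensor_quotient_eq_one {I : Ideal R} (hI : I ≠ ⊤) :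
    finrank (ResidueField R) (ResidueField R ⊗[R] (R ⧸ I)) = 1 := by
  have : Nontrivial (R ⧸ I) := Ideal.Quotient.nontrivial_iff.2 hI
  have : Nontrivial (ResidueField R ⊗[R] (R ⧸ I)) := by
    rwa [← not_subsingleton_iff_nontrivial, subsingleton_tensorProduct,
      not_subsingleton_iff_nontrivial]
  refine le_antisymm (finrank_le_one (1 ⊗ₜ 1) fun y => ?_) finrank_pos
  induction y with
  | zero => exact ⟨0, zero_smul _ _⟩
  | tmul c b =>
    obtain ⟨b, rfl⟩ := Ideal.Quotient.mk_surjective b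
    exact ⟨b • c, by rw [TensorProduct.smul_tmul', smul_eq_mul, mul_one, TensorProduct.smul_tmul,
      Algebra.smul_def, mul_one, Ideal.Quotient.algebraMap_eq]⟩
  | add y z hy hz =>
    obtain ⟨⟨b, rfl⟩, ⟨c, rfl⟩⟩ := And.intro hy hz
    exact ⟨b + c, add_smul _ _ _⟩

open scoped Classical in
theorem IsCyclicDecomposition.finrank_residueField_tensor (h : IsCyclicDecomposition x d) :
    finrank (ResidueField R) (ResidueField R ⊗[R] N) = Fintype.card {j // ¬IsUnit (d j)} := by
  obtain ⟨Ψ⟩ := nonempty_linearEquiv_iff.2 ⟨x, h⟩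
  have hfac (j : J) : finrank (ResidueField R) (ResidueField R ⊗[R] (R ⧸ Ideal.span {d j})) =
      if IsUnit (d j) then 0 else 1 := by
    split_ifs with hj
    · have : Subsingleton (R ⧸ Ideal.span {d j}) :=
        Ideal.Quotient.subsingleton_iff.2 (Ideal.span_singleton_eq_top.2 hj)
      exact finrank_zero_of_subsingleton
    · exact finrank_residueField_tensor_quotient_eq_one (mt Ideal.span_singleton_eq_top.1 hj)
  let Φ := Ψ.baseChange R (ResidueField R) _ _ ≪≫ₗ
    TensorProduct.piRight R (ResidueField R) (ResidueField R) fun j => R ⧸ Ideal.span {d j}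
  rw [Φ.finrank_eq, finrank_pi_fintype, Finset.sum_congr rfl fun j _ => hfac j, Finset.sum_ite]
  simp [Fintype.card_subtype]

end CyclicDecomposition

section LinearAlgebra

variable {k V V' ι₀ ι : Type*} [Field k] [AddCommGroup V] [Module k V]
  [AddCommGroup V'] [Module k V']

/-- The dimension condition on the kernels of the powers of `f`: for `1 ≤ i ≤ n` the graded piece
`ker (f ^ i) / ker (f ^ (i - 1))` has dimension `r (i - 1)`; the indices are shifted so that `r`
starts at `0`. -/
def HasKernelJumps (f : End k V) (n : ℕ) (r : ℕ → ℕ) : Prop :=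
  ∀ i < n, finrank k (LinearMap.ker (f ^ (i + 1))) = finrank k (LinearMap.ker (f ^ i)) + r i

variable [FiniteDimensional k V]

theorem exists_basis_apply_eq_of_linearIndependent [Fintype ι]
    (hι : Fintype.card ι = finrank k V) {f : ι₀ → ι} (hf : Function.Injective f) {u : ι₀ → V}
    (hu : LinearIndependent k u) : ∃ b : Basis ι k V, ∀ i, b (f i) = u i := by
  classical
  let b := Basis.extend hu.linearIndepOn_id
  have := FiniteDimensional.fintypeBasisIndex b
  have hcard : Fintype.card ι = (hu.linearIndepOn_id.extend (Set.subset_univ _)).toFinset.card := by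
    rw [hι, finrank_eq_card_basis b, Set.toFinset_card]
  have hmaps : (Set.range f).MapsTo (Function.extend f u 0)
      (hu.linearIndepOn_id.extend (Set.subset_univ _)).toFinset := by
    rintro _ ⟨i, rfl⟩
    rw [hf.extend_apply, Set.coe_toFinset]
    exact hu.linearIndepOn_id.subset_extend _ ⟨i, rfl⟩
  have hinj : (Set.range f).InjOn (Function.extend f u 0) := by
    rintro _ ⟨i, rfl⟩ _ ⟨j, rfl⟩ hij
    rw [hf.extend_apply, hf.extend_apply] at hij
    rw [hu.injective hij]
  obtain ⟨σ, hσ⟩ := hmaps.exists_equiv_extend_of_card_eq hcard hinj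
  refine ⟨b.reindex (σ.trans (Equiv.subtypeEquivRight fun y => Set.mem_toFinset)).symm, fun i => ?_⟩
  rw [Basis.reindex_apply, Basis.extend_apply_self]
  exact (hσ _ ⟨i, rfl⟩).trans (hf.extend_apply _ _ _)

theorem finrank_comap_of_surjective {q : V →ₗ[k] V'} (hq : Function.Surjective q)
    (P : Submodule k V') :
    finrank k (P.comap q) = finrank k P + finrank k (LinearMap.ker q) := by
  have hrange : LinearMap.range (q.domRestrict (P.comap q)) = P := by
    rw [LinearMap.range_domRestrict, Submodule.map_comap_eq_of_surjective hq]
  have hker : finrank k (LinearMap.ker (q.domRestrict (P.comap q))) =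
      finrank k (LinearMap.ker q) := by
    rw [LinearMap.ker_domRestrict]
    exact (Submodule.comapSubtypeEquivOfLe (LinearMap.ker_le_comap q)).finrank_eq
  rw [← LinearMap.finrank_range_add_finrank_ker (q.domRestrict (P.comap q)), hrange, hker]

theorem finrank_ker_pow_succ {f : End k V} {g : End k V'} {q : V →ₗ[k] V'}
    (hq : Function.Surjective q) (hqf : q ∘ₗ f = g ∘ₗ q)
    (hker : LinearMap.ker f = LinearMap.ker q) (i : ℕ) :
    finrank k (LinearMap.ker (f ^ (i + 1))) =
      finrank k (LinearMap.ker (g ^ i)) + finrank k (LinearMap.ker q) := by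
  have hcomap : LinearMap.ker (f ^ (i + 1)) = (LinearMap.ker (g ^ i)).comap q := by
    rw [← LinearMap.ker_comp, End.commute_pow_left_of_commute hqf.symm, LinearMap.ker_comp,
      ← hker, ← LinearMap.ker_comp, pow_succ', End.mul_eq_comp]
  rw [hcomap, finrank_comap_of_surjective hq]

theorem hasKernelJumps_succ_iff {f : End k V} {g : End k V'} {q : V →ₗ[k] V'}
    (hq : Function.Surjective q) (hqf : q ∘ₗ f = g ∘ₗ q)
    (hle : LinearMap.ker q ≤ LinearMap.ker f) {n : ℕ} {r : ℕ → ℕ}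
    (hr : finrank k (LinearMap.ker q) = r 0) :
    HasKernelJumps f (n + 1) r ↔
      LinearMap.ker f = LinearMap.ker q ∧ HasKernelJumps g n fun i => r (i + 1) := by
  have hjump_zero : finrank k (LinearMap.ker (f ^ (0 + 1))) =
      finrank k (LinearMap.ker (f ^ 0)) + r 0 ↔ LinearMap.ker f = LinearMap.ker q := by
    rw [zero_add, pow_one, pow_zero, End.one_eq_id, LinearMap.ker_id, finrank_bot, zero_add, ← hr]
    exact ⟨fun h => (Submodule.eq_of_le_of_finrank_eq hle h.symm).symm, fun h => by rw [h]⟩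
  have hjump_succ (h : LinearMap.ker f = LinearMap.ker q) (i : ℕ) :
      finrank k (LinearMap.ker (f ^ (i + 1 + 1))) =
        finrank k (LinearMap.ker (f ^ (i + 1))) + r (i + 1) ↔
      finrank k (LinearMap.ker (g ^ (i + 1))) = finrank k (LinearMap.ker (g ^ i)) + r (i + 1) := by
    rw [finrank_ker_pow_succ hq hqf h, finrank_ker_pow_succ hq hqf h]
    omega
  rw [HasKernelJumps, Nat.forall_lt_succ_left, hjump_zero]
  exact and_congr_right fun h => forall₂_congr fun i _ => hjump_succ h i

end LinearAlgebra

section LocalRing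

variable {A M ι₀ ι : Type*} [CommRing A] [IsLocalRing A] [AddCommGroup M] [Module A M]
  [Module.Finite A M]

theorem exists_basis_apply_eq_of_linearIndependent_tmul [Free A M] [Fintype ι]
    (hι : Fintype.card ι = finrank A M) {f : ι₀ → ι} (hf : Function.Injective f) {u : ι₀ → M}
    (hu : LinearIndependent (ResidueField A) fun i => (1 : ResidueField A) ⊗ₜ[A] u i) :
    ∃ b : Basis ι A M, ∀ i, b (f i) = u i := by
  obtain ⟨b, hb⟩ := exists_basis_apply_eq_of_linearIndependent
    (hι.trans (finrank_baseChange (R := ResidueField A)).symm) hf hu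
  have hmk : Function.Surjective (TensorProduct.mk A (ResidueField A) M 1) :=
    TensorProduct.mk_surjective _ _ _ residue_surjective
  choose w hw using fun i => hmk (b i)
  have hextend (i : ι) : 1 ⊗ₜ Function.extend f u w i = b i := by
    by_cases hi : ∃ i₀, f i₀ = i
    · obtain ⟨i₀, rfl⟩ := hi
      rw [hf.extend_apply, hb]
    · rw [Function.extend_apply' _ _ _ hi]
      exact hw i
  have hspan := span_eq_top_of_tmul_eq_basis _ b hextend
  refine ⟨Basis.mk (linearIndependent_of_top_le_span_of_card_eq_finrank hspan.ge hι) hspan.ge,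
    fun i => ?_⟩
  rw [Basis.mk_apply, hf.extend_apply]

theorem finrank_ker_baseChange_residueField (φ : End A M) :
    finrank (ResidueField A) (LinearMap.ker (φ.baseChange (ResidueField A))) =
      finrank (ResidueField A) (ResidueField A ⊗[A] (M ⧸ LinearMap.range φ)) := by
  have hexact : LinearMap.ker ((LinearMap.range φ).mkQ.baseChange (ResidueField A)) =
      LinearMap.range (φ.baseChange (ResidueField A)) :=
    Submodule.ext (lTensor_exact (ResidueField A) (LinearMap.exact_map_mkQ_range φ)
      (Submodule.mkQ_surjective _))
  have hsurj : Function.Surjective ((LinearMap.range φ).mkQ.baseChange (ResidueField A)) :=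
    LinearMap.lTensor_surjective _ (Submodule.mkQ_surjective _)
  have hrank := LinearMap.finrank_range_add_finrank_ker (φ.baseChange (ResidueField A))
  have hrank' := LinearMap.finrank_range_add_finrank_ker
    ((LinearMap.range φ).mkQ.baseChange (ResidueField A))
  rw [hexact, LinearMap.range_eq_top.2 hsurj, finrank_top] at hrank'
  omega

end LocalRing

section Step

variable {A M M' : Type*} [CommRing A] [AddCommGroup M] [Module A M]
  [AddCommGroup M'] [Module A M'] {φ : End A M} {φ' : End A M'} {q : M →ₗ[A] M'}
  {ψ : M' →ₗ[A] M} {a : A}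

theorem apply_eq_smul_of_mem_ker (hψ : ψ ∘ₗ q = φ - a • LinearMap.id) {x : M} (hx : q x = 0) :
    φ x = a • x := by
  have hψx : ψ (q x) = φ x - a • x := congr($hψ x)
  rwa [hx, map_zero, eq_comm, sub_eq_zero] at hψx

/-- The map `M / φ M → M' / φ' M'` induced by an intertwiner `q`; it compares the elementary
divisors of `φ` with those of the induced endomorphism `φ'` of a quotient. -/
def cokernelMap (hqφ : q ∘ₗ φ = φ' ∘ₗ q) :
    (M ⧸ LinearMap.range φ) →ₗ[A] M' ⧸ LinearMap.range φ' :=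
  Submodule.mapQ _ _ q <| by
    rintro _ ⟨x, rfl⟩
    exact ⟨q x, congr($hqφ.symm x)⟩

theorem mkQ_range_apply (φ : End A M) (x : M) : (LinearMap.range φ).mkQ (φ x) = 0 :=
  (Submodule.Quotient.mk_eq_zero _).2 ⟨x, rfl⟩

theorem cokernelMap_surjective (hqφ : q ∘ₗ φ = φ' ∘ₗ q) (hq : Function.Surjective q) :
    Function.Surjective (cokernelMap hqφ) := by
  intro y
  obtain ⟨y, rfl⟩ := Submodule.mkQ_surjective _ y
  obtain ⟨x, rfl⟩ := hq y
  exact ⟨Submodule.Quotient.mk x, rfl⟩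

theorem exists_apply_eq_and_mkQ_eq (hqφ : q ∘ₗ φ = φ' ∘ₗ q) (hq : Function.Surjective q)
    {m' : M'} {y : M ⧸ LinearMap.range φ} (h : (LinearMap.range φ').mkQ m' = cokernelMap hqφ y) :
    ∃ m, q m = m' ∧ (LinearMap.range φ).mkQ m = y := by
  obtain ⟨y, rfl⟩ := Submodule.mkQ_surjective _ y
  obtain ⟨z, hz⟩ : m' - q y ∈ LinearMap.range φ' := (Submodule.Quotient.eq _).1 h
  obtain ⟨z, rfl⟩ := hq z
  have hqz : q (φ z) = m' - q y := congr($hqφ z).trans hz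
  refine ⟨y + φ z, by rw [map_add, hqz, add_sub_cancel], ?_⟩
  rw [map_add, mkQ_range_apply, add_zero]

theorem ker_cokernelMap (hqφ : q ∘ₗ φ = φ' ∘ₗ q) (hq : Function.Surjective q) :
    LinearMap.ker (cokernelMap hqφ) = (LinearMap.ker q).map (LinearMap.range φ).mkQ := by
  apply le_antisymm
  · intro y hy
    exact exists_apply_eq_and_mkQ_eq hqφ hq ((map_zero _).trans hy.symm)
  · rintro _ ⟨x, hx, rfl⟩
    have hx : q x = 0 := hx
    simp [cokernelMap, hx]

variable [IsLocalRing A]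

theorem one_tmul_smul_eq_zero (ha : a ∈ maximalIdeal A) (x : M) :
    (1 : ResidueField A) ⊗ₜ[A] (a • x) = 0 := by
  rw [← TensorProduct.smul_tmul, Algebra.smul_def, mul_one, ResidueField.algebraMap_eq,
    (residue_eq_zero_iff a).2 ha, TensorProduct.zero_tmul]

theorem baseChange_residueField_eq_comp (hψ : ψ ∘ₗ q = φ - a • LinearMap.id)
    (ha : a ∈ maximalIdeal A) :
    φ.baseChange (ResidueField A) =
      ψ.baseChange (ResidueField A) ∘ₗ q.baseChange (ResidueField A) := by
  ext x
  have hψx : ψ (q x) = φ x - a • x := congr($hψ x)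
  change (1 : ResidueField A) ⊗ₜ[A] φ x = 1 ⊗ₜ ψ (q x)
  rw [hψx, TensorProduct.tmul_sub, one_tmul_smul_eq_zero ha, sub_zero]

theorem ker_baseChange_residueField_le (hψ : ψ ∘ₗ q = φ - a • LinearMap.id)
    (ha : a ∈ maximalIdeal A) :
    LinearMap.ker (q.baseChange (ResidueField A)) ≤
      LinearMap.ker (φ.baseChange (ResidueField A)) := by
  rw [baseChange_residueField_eq_comp hψ ha]
  exact LinearMap.ker_le_ker_comp _ _

theorem injective_baseChange_residueField_of_ker_eq (hψ : ψ ∘ₗ q = φ - a • LinearMap.id)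
    (ha : a ∈ maximalIdeal A) (hq : Function.Surjective q)
    (hker : LinearMap.ker (φ.baseChange (ResidueField A)) =
      LinearMap.ker (q.baseChange (ResidueField A))) :
    Function.Injective (ψ.baseChange (ResidueField A)) := by
  have hqκ : Function.Surjective (q.baseChange (ResidueField A)) :=
    LinearMap.lTensor_surjective _ hq
  rw [baseChange_residueField_eq_comp hψ ha, LinearMap.ker_comp] at hker
  rw [← LinearMap.ker_eq_bot]
  apply Submodule.comap_injective_of_surjective hqκ
  rw [hker, Submodule.comap_bot]

theorem cokernelMap_eq_zero_iff [IsDomain A] [Module.Finite A M] [Free A M] [Module.Finite A M']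
    [Free A M'] (hqφ : q ∘ₗ φ = φ' ∘ₗ q) (hq : Function.Surjective q)
    (hψ : ψ ∘ₗ q = φ - a • LinearMap.id) (ha0 : a ≠ 0)
    (hψκ : Function.Injective (ψ.baseChange (ResidueField A))) (y : M ⧸ LinearMap.range φ) :
    cokernelMap hqφ y = 0 ↔ a • y = 0 := by
  constructor
  · intro hy
    obtain ⟨x, hx, rfl⟩ := ker_cokernelMap hqφ hq ▸ LinearMap.mem_ker.2 hy
    rw [← map_smul, ← apply_eq_smul_of_mem_ker hψ hx, mkQ_range_apply]
  · intro hy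
    obtain ⟨y, rfl⟩ := Submodule.mkQ_surjective _ y
    obtain ⟨x, hx⟩ : a • y ∈ LinearMap.range φ := (Submodule.Quotient.mk_eq_zero _).1 hy
    obtain ⟨s, hs⟩ := (split_injective_iff_lTensor_residueField_injective ψ).2 hψκ
    have hψx : ψ (q x) = a • (y - x) := by
      simpa [hx, smul_sub] using congr($hψ x)
    have hqx : q x = a • s (y - x) := by
      rw [← map_smul, ← hψx]
      exact congr($hs.symm (q x))
    have hqy : a • q y = a • φ' (s (y - x)) := by
      rw [← map_smul, ← map_smul, ← hqx, ← hx]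
      exact congr($hqφ x)
    exact (Submodule.Quotient.mk_eq_zero _).2 ⟨s (y - x), (smul_right_injective M' ha0 hqy).symm⟩

end Step

section Kernel

variable {A M M' : Type*} [CommRing A] [AddCommGroup M] [Module A M] [AddCommGroup M']
  [Module A M'] [Projective A M'] {q : M →ₗ[A] M'}

theorem exists_comp_subtype_ker_eq_id (hq : Function.Surjective q) :
    ∃ l : M →ₗ[A] LinearMap.ker q, l ∘ₗ (LinearMap.ker q).subtype = LinearMap.id :=
  ((LinearMap.exact_subtype_ker_map q).split_tfae'.out 0 1 rfl rfl).1
    ⟨Subtype.val_injective, q.exists_rightInverse_of_surjective (LinearMap.range_eq_top.2 hq)⟩ |>.2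

theorem finite_ker_of_projective [Module.Finite A M] (hq : Function.Surjective q) :
    Module.Finite A (LinearMap.ker q) := by
  obtain ⟨l, hl⟩ := exists_comp_subtype_ker_eq_id hq
  exact Module.Finite.of_surjective l fun w => ⟨w, congr($hl w)⟩

theorem free_ker_of_projective [IsLocalRing A] [Module.Finite A M] [Projective A M]
    (hq : Function.Surjective q) : Free A (LinearMap.ker q) := by
  obtain ⟨l, hl⟩ := exists_comp_subtype_ker_eq_id hq
  have := finite_ker_of_projective hq
  have := Projective.of_split _ _ hl
  exact free_of_flat_of_isLocalRing

theorem injective_baseChange_subtype_ker (B : Type*) [CommRing B] [Algebra A B]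
    (hq : Function.Surjective q) :
    Function.Injective ((LinearMap.ker q).subtype.baseChange B) := by
  obtain ⟨l, hl⟩ := exists_comp_subtype_ker_eq_id hq
  refine Function.LeftInverse.injective (g := l.baseChange B) fun x => ?_
  rw [← LinearMap.comp_apply, ← LinearMap.baseChange_comp, hl, LinearMap.baseChange_id,
    LinearMap.id_apply]

end Kernel

section Lifting

variable {A M M' ι J : Type*} [CommRing A] [AddCommGroup M] [Module A M] [AddCommGroup M']
  [Module A M'] {φ : End A M} {φ' : End A M'} {q : M →ₗ[A] M'} {ψ : M' →ₗ[A] M} {a : A}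

theorem sum_smul_mk_basis_ker_eq_zero_iff [Fintype ι] (hqφ : q ∘ₗ φ = φ' ∘ₗ q)
    (hψ : ψ ∘ₗ q = φ - a • LinearMap.id) (hφ' : Function.Injective φ')
    (b : Basis ι A (LinearMap.ker q)) (β : ι → A) :
    ∑ i, β i • (LinearMap.range φ).mkQ (b i) = 0 ↔ ∀ i, a ∣ β i := by
  have hsum : ∑ i, β i • (LinearMap.range φ).mkQ (b i) =
      (LinearMap.range φ).mkQ (∑ i, β i • b i : LinearMap.ker q) := by
    simp only [Submodule.coe_sum, Submodule.coe_smul, map_sum, map_smul]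
  rw [hsum, Submodule.mkQ_apply, Submodule.Quotient.mk_eq_zero]
  constructor
  · rintro ⟨x, hx⟩ i
    have hqx : q x = 0 := hφ' <| by
      rw [map_zero, ← LinearMap.comp_apply, ← hqφ, LinearMap.comp_apply, hx]
      exact (∑ i, β i • b i : LinearMap.ker q).2
    rw [apply_eq_smul_of_mem_ker hψ hqx] at hx
    have hrepr : a • (⟨x, hqx⟩ : LinearMap.ker q) = ∑ i, β i • b i := Subtype.ext hx
    refine ⟨b.repr ⟨x, hqx⟩ i, ?_⟩
    rw [← b.repr_sum_self β, ← hrepr, map_smul, Finsupp.smul_apply, smul_eq_mul]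
  · intro h
    choose γ hγ using h
    refine ⟨(∑ i, γ i • b i : LinearMap.ker q), ?_⟩
    rw [apply_eq_smul_of_mem_ker hψ (∑ i, γ i • b i : LinearMap.ker q).2, ← Submodule.coe_smul,
      Finset.smul_sum]
    simp only [smul_smul, hγ]

theorem IsCyclicDecomposition.of_cokernelMap [Fintype J] (hqφ : q ∘ₗ φ = φ' ∘ₗ q)
    (hq : Function.Surjective q) (hψ : ψ ∘ₗ q = φ - a • LinearMap.id)
    (hφ' : Function.Injective φ') {p : J → Prop} [DecidablePred p]
    (b : Basis {j // p j} A (LinearMap.ker q))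
    {x : J → M ⧸ LinearMap.range φ} {d : J → A}
    (hx : IsCyclicDecomposition (cokernelMap hqφ ∘ x) d)
    (hb : ∀ i, (LinearMap.range φ).mkQ (b i) = d i • x i) (hx0 : ∀ j, ¬p j → x j = 0) :
    IsCyclicDecomposition x fun j => (if p j then a else 1) * d j := by
  refine hx.of_comp ?_ fun β => ?_
  · rw [ker_cokernelMap hqφ hq]
    rintro _ ⟨w, hw, rfl⟩
    have hmem := Submodule.mem_map_of_mem (f := (LinearMap.range φ).mkQ ∘ₗ Submodule.subtype _)
      (b.mem_span ⟨w, hw⟩)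
    rw [Submodule.map_span, ← Set.range_comp] at hmem
    refine Submodule.span_mono ?_ hmem
    rintro _ ⟨i, rfl⟩
    exact ⟨i, (hb i).symm⟩
  · have hsum : ∑ j, β j • d j • x j = ∑ i : {j // p j}, β i • (LinearMap.range φ).mkQ (b i) := by
      refine (Fintype.sum_of_injective _ Subtype.val_injective _ _ (fun j hj => ?_)
        fun i => by rw [hb]).symm
      rw [hx0 j fun h => hj ⟨⟨j, h⟩, rfl⟩, smul_zero, smul_zero]
    rw [hsum, sum_smul_mk_basis_ker_eq_zero_iff hqφ hψ hφ', Subtype.forall]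
    refine forall_congr' fun j => ?_
    split_ifs with hj <;> simp [hj]

variable [IsLocalRing A]

theorem exists_linearIndependent_tmul_ker (hqφ : q ∘ₗ φ = φ' ∘ₗ q) (hq : Function.Surjective q)
    (hψ : ψ ∘ₗ q = φ - a • LinearMap.id) (ha : a ∈ maximalIdeal A)
    (hψκ : Function.Injective (ψ.baseChange (ResidueField A)))
    {a' : A} (ha' : a' ∈ maximalIdeal A) {w' : ι → M'} (hφw' : ∀ i, φ' (w' i) = a' • w' i)
    (hw' : LinearIndependent (ResidueField A) fun i => (1 : ResidueField A) ⊗ₜ[A] w' i)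
    {c : ι → A} {y : ι → M ⧸ LinearMap.range φ}
    (hy : ∀ i, (LinearMap.range φ').mkQ (w' i) = c i • cokernelMap hqφ (y i)) :
    ∃ w : ι → LinearMap.ker q,
      (LinearIndependent (ResidueField A) fun i => (1 : ResidueField A) ⊗ₜ[A] w i) ∧
      ∀ i, (LinearMap.range φ).mkQ (w i) = (a' * c i) • y i := by
  have hlift (i : ι) : ∃ m : M, q m = w' i ∧ (LinearMap.range φ).mkQ m = c i • y i :=
    exists_apply_eq_and_mkQ_eq hqφ hq (by rw [hy, map_smul])
  choose m hqm hm using hlift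
  have hmem (i : ι) : a' • m i - φ (m i) ∈ LinearMap.ker q := by
    rw [LinearMap.mem_ker, map_sub, map_smul, hqm, ← LinearMap.comp_apply q, hqφ,
      LinearMap.comp_apply, hqm, hφw', sub_self]
  refine ⟨fun i => ⟨_, hmem i⟩, ?_, fun i => ?_⟩
  · have htmul (i : ι) : (1 : ResidueField A) ⊗ₜ[A] (a' • m i - φ (m i)) =
        -ψ.baseChange (ResidueField A) (1 ⊗ₜ w' i) := by
      rw [TensorProduct.tmul_sub, one_tmul_smul_eq_zero ha', zero_sub, ← hqm,
        ← LinearMap.baseChange_tmul, ← LinearMap.baseChange_tmul,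
        baseChange_residueField_eq_comp hψ ha, LinearMap.comp_apply]
    refine LinearIndependent.of_comp ((LinearMap.ker q).subtype.baseChange (ResidueField A)) ?_
    have hneg := (hw'.map' _ (LinearMap.ker_eq_bot.2 hψκ)).neg
    simpa only [Function.comp_def, LinearMap.baseChange_tmul, Submodule.subtype_apply, htmul,
      Pi.neg_def] using hneg
  · rw [map_sub, map_smul, hm, mkQ_range_apply, sub_zero, smul_smul]

theorem linearIndependent_tmul_basis_ker [Projective A M'] (hq : Function.Surjective q)
    (b : Basis ι A (LinearMap.ker q)) :
    LinearIndependent (ResidueField A) fun i => (1 : ResidueField A) ⊗ₜ[A] (b i : M) := by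
  have hb := (b.baseChange (ResidueField A)).linearIndependent.map' _
    (LinearMap.ker_eq_bot.2 (injective_baseChange_subtype_ker (ResidueField A) hq))
  simpa only [Function.comp_def, Basis.baseChange_apply, LinearMap.baseChange_tmul,
    Submodule.subtype_apply] using hb

theorem exists_isCyclicDecomposition_cokernel_of_quotient [Module.Finite A M] [Free A M]
    [Free A M'] [Fintype J] (hqφ : q ∘ₗ φ = φ' ∘ₗ q) (hq : Function.Surjective q)
    (hψ : ψ ∘ₗ q = φ - a • LinearMap.id) (ha : a ∈ maximalIdeal A)
    (hψκ : Function.Injective (ψ.baseChange (ResidueField A))) (hφ' : Function.Injective φ')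
    {p p' : J → Prop} [DecidablePred p] [DecidablePred p'] (hp : ∀ j, p' j → p j)
    (hcard : Fintype.card {j // p j} = finrank A (LinearMap.ker q))
    {x' : J → M' ⧸ LinearMap.range φ'} {d : J → A} (hx' : IsCyclicDecomposition x' d)
    {a' : A} (ha' : a' ∈ maximalIdeal A) {w' : {j // p' j} → M'}
    (hφw' : ∀ i, φ' (w' i) = a' • w' i)
    (hw' : LinearIndependent (ResidueField A) fun i => (1 : ResidueField A) ⊗ₜ[A] w' i)
    {c : J → A} (hc : ∀ i, (LinearMap.range φ').mkQ (w' i) = c i • x' i)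
    (hd : ∀ j, d j = if p' j then a' * c j else 1) :
    ∃ x : J → M ⧸ LinearMap.range φ,
      IsCyclicDecomposition x (fun j => (if p j then a else 1) * d j) ∧
      ∃ b : Basis {j // p j} A (LinearMap.ker q),
        ∀ i, (LinearMap.range φ).mkQ (b i) = d i • x i := by
  choose y hy using fun j => cokernelMap_surjective hqφ hq (x' j)
  obtain ⟨w, hw, hwy⟩ := exists_linearIndependent_tmul_ker hqφ hq hψ ha hψκ ha' hφw' hw'
    (c := fun i => c i) (y := fun i => y i) fun i => by rw [hc, hy]
  have := finite_ker_of_projective hq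
  have := free_ker_of_projective hq
  obtain ⟨b, hb⟩ := exists_basis_apply_eq_of_linearIndependent_tmul hcard
    (Subtype.map_injective hp Function.injective_id) hw
  let x (j : J) : M ⧸ LinearMap.range φ :=
    if p' j then y j else if h : p j then (LinearMap.range φ).mkQ (b ⟨j, h⟩) else 0
  have hx'x : cokernelMap hqφ ∘ x = x' := by
    ext j
    by_cases hj' : p' j
    · simp [x, hj', hy]
    · have hx'j : x' j = 0 := hx'.eq_zero_of_isUnit (by simp [hd, hj'])
      by_cases hj : p j
      · have hqb : q (b ⟨j, hj⟩) = 0 := (b ⟨j, hj⟩).2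
        simp [x, hj', hj, hx'j, cokernelMap, hqb]
      · simp [x, hj', hj, hx'j]
  have hbx (i : {j // p j}) : (LinearMap.range φ).mkQ (b i) = d i • x i := by
    by_cases hi : p' i
    · have hbi : b i = w ⟨i, hi⟩ := hb ⟨i, hi⟩
      simp only [x, if_pos hi, hd, hbi, hwy]
    · simp [x, hd, hi, i.2]
  exact ⟨x, IsCyclicDecomposition.of_cokernelMap hqφ hq hψ hφ' b (hx'x ▸ hx') hbx
    fun j hj => by simp [x, hj, mt (hp j) hj], b, hbx⟩

end Lifting

theorem prod_range_eq_ite_mul {A : Type*} [CommMonoid A] (a : ℕ → A) (l : ℕ) :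
    ∏ i ∈ Finset.range l, a i =
      (if 0 < l then a 0 else 1) * ∏ i ∈ Finset.range (l - 1), a (i + 1) := by
  cases l with
  | zero => simp
  | succ l => simp [Finset.prod_range_succ', mul_comm]

section Filtration

variable {A M J : Type*} [CommRing A] [AddCommGroup M] [Module A M] {φ : End A M} {a : ℕ → A}
  {r : ℕ → ℕ} {n : ℕ} {W : ℕ → Submodule A M}

/-- `⊥ = W 0 ≤ W 1 ≤ ⋯ ≤ W n = ⊤` is a filtration of `M` with free quotients `M ⧸ W i` such that
`φ` acts on the `i`-th graded piece `W (i + 1) ⧸ W i`, of rank `r i`, as the scalar `a i`.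
The filtration is continued by `W i = ⊤` for `i ≥ n`. -/
structure IsScalarFiltration (φ : End A M) (a : ℕ → A) (r : ℕ → ℕ) (n : ℕ)
    (W : ℕ → Submodule A M) : Prop where
  zero_eq_bot : W 0 = ⊥
  last_eq_top : W n = ⊤
  mono : Monotone W
  free_quotient (i : ℕ) : Free A (M ⧸ W i)
  finrank_quotient (i : ℕ) : finrank A (M ⧸ W i) = finrank A (M ⧸ W (i + 1)) + r i
  sub_smul_mem (i : ℕ) {x : M} (hx : x ∈ W (i + 1)) : φ x - a i • x ∈ W i

namespace IsScalarFiltration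

theorem le_comap_one (h : IsScalarFiltration φ a r n W) : W 1 ≤ (W 1).comap φ := by
  intro x hx
  have hsub : φ x - a 0 • x ∈ W 1 := h.mono zero_le_one (h.sub_smul_mem 0 hx)
  exact ((W 1).sub_mem_iff_left (Submodule.smul_mem _ _ hx)).1 hsub

/-- The endomorphism of `M ⧸ W 1` induced by `φ`, on which the inductions on the length of
the filtration recurse. -/
def quotientEnd (h : IsScalarFiltration φ a r n W) : End A (M ⧸ W 1) :=
  (W 1).mapQ (W 1) φ h.le_comap_one

theorem mkQ_comp (h : IsScalarFiltration φ a r n W) :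
    (W 1).mkQ ∘ₗ φ = h.quotientEnd ∘ₗ (W 1).mkQ :=
  rfl

theorem quotient (h : IsScalarFiltration φ a r (n + 1) W) :
    IsScalarFiltration h.quotientEnd (fun i => a (i + 1)) (fun i => r (i + 1)) n
      fun i => (W (i + 1)).map (W 1).mkQ where
  zero_eq_bot := by rw [zero_add, Submodule.mkQ_map_self]
  last_eq_top := by rw [h.last_eq_top, Submodule.map_top, Submodule.range_mkQ]
  mono i j hij := Submodule.map_mono (h.mono (by omega))
  free_quotient i :=
    have := h.free_quotient (i + 1)
    .of_equiv (Submodule.quotientQuotientEquivQuotient _ _ (h.mono (by omega))).symm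
  finrank_quotient i := by
    rw [(Submodule.quotientQuotientEquivQuotient _ _ (h.mono (by omega))).finrank_eq,
      (Submodule.quotientQuotientEquivQuotient _ _ (h.mono (by omega))).finrank_eq,
      h.finrank_quotient]
  sub_smul_mem := by
    rintro i _ ⟨x, hx, rfl⟩
    exact ⟨_, h.sub_smul_mem (i + 1) hx, rfl⟩

theorem free (h : IsScalarFiltration φ a r n W) : Free A M :=
  have := h.free_quotient 0
  .of_equiv (Submodule.quotEquivOfEqBot _ h.zero_eq_bot)

theorem exists_comp_mkQ_eq (h : IsScalarFiltration φ a r n W) :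
    ∃ ψ : (M ⧸ W 1) →ₗ[A] M, ψ ∘ₗ (W 1).mkQ = φ - a 0 • LinearMap.id := by
  refine ⟨(W 1).liftQ (φ - a 0 • LinearMap.id) fun x hx => ?_, (W 1).liftQ_mkQ _ _⟩
  have hx0 := h.sub_smul_mem 0 hx
  rwa [h.zero_eq_bot] at hx0

section LocalRing

variable [IsLocalRing A] [Module.Finite A M]

theorem finrank_ker_mkQ_baseChange (h : IsScalarFiltration φ a r n W) :
    finrank (ResidueField A) (LinearMap.ker ((W 1).mkQ.baseChange (ResidueField A))) = r 0 := by
  have := h.free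
  have := h.free_quotient 1
  have hsurj : Function.Surjective ((W 1).mkQ.baseChange (ResidueField A)) :=
    LinearMap.lTensor_surjective _ (Submodule.mkQ_surjective _)
  have hquot := h.finrank_quotient 0
  have hsum := LinearMap.finrank_range_add_finrank_ker ((W 1).mkQ.baseChange (ResidueField A))
  rw [(Submodule.quotEquivOfEqBot _ h.zero_eq_bot).finrank_eq, zero_add] at hquot
  rw [LinearMap.range_eq_top.2 hsurj, finrank_top, finrank_baseChange, finrank_baseChange] at hsum
  omega

theorem hasKernelJumps_succ_iff (h : IsScalarFiltration φ a r (n + 1) W)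
    (ha : a 0 ∈ maximalIdeal A) :
    HasKernelJumps (φ.baseChange (ResidueField A)) (n + 1) r ↔
      LinearMap.ker (φ.baseChange (ResidueField A)) =
        LinearMap.ker ((W 1).mkQ.baseChange (ResidueField A)) ∧
      HasKernelJumps (h.quotientEnd.baseChange (ResidueField A)) n fun i => r (i + 1) := by
  obtain ⟨ψ, hψ⟩ := h.exists_comp_mkQ_eq
  refine _root_.hasKernelJumps_succ_iff
    (LinearMap.lTensor_surjective _ (Submodule.mkQ_surjective _)) ?_
    (ker_baseChange_residueField_le hψ ha) h.finrank_ker_mkQ_baseChange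
  rw [← LinearMap.baseChange_comp, h.mkQ_comp, LinearMap.baseChange_comp]

end LocalRing

variable [IsDomain A]

theorem injective (h : IsScalarFiltration φ a r n W) (ha : ∀ i, a i ≠ 0) :
    Function.Injective φ := by
  rw [← LinearMap.ker_eq_bot, eq_bot_iff]
  intro x hx
  have hmem (i : ℕ) (hi : x ∈ W (i + 1)) : x ∈ W i := by
    have := h.free_quotient i
    have hax : a i • (W i).mkQ x = 0 := by
      rw [← map_smul, ← neg_eq_zero, ← map_neg, ← zero_sub, ← LinearMap.mem_ker.1 hx]
      exact (Submodule.Quotient.mk_eq_zero _).2 (h.sub_smul_mem i hi)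
    exact (Submodule.Quotient.mk_eq_zero _).1 ((smul_eq_zero_iff_right (ha i)).1 hax)
  have hdescend (i : ℕ) (hi : x ∈ W i) : x ∈ W 0 := by
    induction i with
    | zero => exact hi
    | succ i ih => exact ih (hmem i hi)
  exact h.zero_eq_bot ▸ hdescend n (h.last_eq_top ▸ Submodule.mem_top)

theorem rank_eq_zero (h : IsScalarFiltration φ a r n W) {i : ℕ} (hi : n ≤ i) : r i = 0 := by
  have hW (k : ℕ) (hk : n ≤ k) : finrank A (M ⧸ W k) = 0 := by
    rw [show W k = ⊤ from top_le_iff.1 (h.last_eq_top ▸ h.mono hk)]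
    exact finrank_zero_of_subsingleton
  simpa only [hW i hi, hW (i + 1) (by omega), zero_add, eq_comm] using h.finrank_quotient i

variable [Module.Finite A M]

theorem rank_le_finrank (h : IsScalarFiltration φ a r n W) (i : ℕ) : r i ≤ finrank A M :=
  (le_add_self.trans (h.finrank_quotient i).ge).trans (Submodule.finrank_quotient_le _)

theorem finrank_ker_mkQ (h : IsScalarFiltration φ a r n W) :
    finrank A (LinearMap.ker (W 1).mkQ) = r 0 := by
  have hquot := h.finrank_quotient 0
  have hsum := (W 1).finrank_quotient_add_finrank
  rw [(Submodule.quotEquivOfEqBot _ h.zero_eq_bot).finrank_eq, zero_add] at hquot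
  rw [Submodule.ker_mkQ]
  omega

variable [IsLocalRing A] [Fintype J]

theorem hasKernelJumps_of_isCyclicDecomposition (h : IsScalarFiltration φ a r n W)
    (ha : ∀ i, a i ∈ maximalIdeal A) (ha0 : ∀ i, a i ≠ 0) {l : J → ℕ}
    (hl : ∀ i, Fintype.card {j // i < l j} = r i) {x : J → M ⧸ LinearMap.range φ}
    (hx : IsCyclicDecomposition x fun j => ∏ i ∈ Finset.range (l j), a i) :
    HasKernelJumps (φ.baseChange (ResidueField A)) n r := by
  classical
  induction n generalizing M φ a r W l with
  | zero => exact fun i hi => absurd hi i.not_lt_zero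
  | succ n ih =>
    have := h.free
    have := h.free_quotient 1
    obtain ⟨ψ, hψ⟩ := h.exists_comp_mkQ_eq
    have hunit (j : J) : ¬IsUnit (∏ i ∈ Finset.range (l j), a i) ↔ 0 < l j := by
      rw [prod_range_eq_ite_mul]
      split_ifs with hj
      · exact iff_of_true (fun hu => ha 0 (isUnit_of_mul_isUnit_left hu)) hj
      · simp [Nat.eq_zero_of_not_pos hj]
    have hker : LinearMap.ker (φ.baseChange (ResidueField A)) =
        LinearMap.ker ((W 1).mkQ.baseChange (ResidueField A)) := by
      refine (Submodule.eq_of_le_of_finrank_eq (ker_baseChange_residueField_le hψ (ha 0)) ?_).symm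
      rw [h.finrank_ker_mkQ_baseChange, finrank_ker_baseChange_residueField,
        hx.finrank_residueField_tensor, ← hl]
      exact Fintype.card_congr (Equiv.subtypeEquivRight fun j => (hunit j).symm)
    have hψκ := injective_baseChange_residueField_of_ker_eq hψ (ha 0) (Submodule.mkQ_surjective _)
      hker
    have hx' : IsCyclicDecomposition (cokernelMap h.mkQ_comp ∘ x)
        fun j => ∏ i ∈ Finset.range (l j - 1), a (i + 1) := by
      refine hx.map (cokernelMap_surjective _ (Submodule.mkQ_surjective _))
        (cokernelMap_eq_zero_iff _ (Submodule.mkQ_surjective _) hψ (ha0 0) hψκ) fun j α => ?_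
      rw [prod_range_eq_ite_mul]
      split_ifs with hj
      · exact mul_dvd_mul_iff_left (ha0 0)
      · simp [Nat.eq_zero_of_not_pos hj]
    refine (h.hasKernelJumps_succ_iff (ha 0)).2 ⟨hker, ih h.quotient (fun i => ha (i + 1))
      (fun i => ha0 (i + 1)) (fun i => ?_) hx'⟩
    simp only [← hl, Nat.lt_sub_iff_add_lt]

-- The basis `b` strengthens the induction hypothesis: its image in `W 1` of the next larger module
-- is the part of a basis there to which the generators `x j` have to be adapted.
theorem exists_isCyclicDecomposition_of_hasKernelJumps (h : IsScalarFiltration φ a r n W)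
    (ha : ∀ i, a i ∈ maximalIdeal A) (ha0 : ∀ i, a i ≠ 0) {l : J → ℕ}
    (hl : ∀ i, Fintype.card {j // i < l j} = r i)
    (hφ : HasKernelJumps (φ.baseChange (ResidueField A)) n r) :
    ∃ x : J → M ⧸ LinearMap.range φ,
      IsCyclicDecomposition x (fun j => ∏ i ∈ Finset.range (l j), a i) ∧
      ∃ b : Basis {j // 0 < l j} A (LinearMap.ker (W 1).mkQ),
        ∀ j, (LinearMap.range φ).mkQ (b j) = (∏ i ∈ Finset.range (l j - 1), a (i + 1)) • x j := by
  classical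
  induction n generalizing M φ a r W l with
  | zero =>
    have hM : Subsingleton M := (Submodule.subsingleton_iff A).1
      (subsingleton_of_bot_eq_top (h.zero_eq_bot.symm.trans h.last_eq_top))
    have hN : Subsingleton (M ⧸ LinearMap.range φ) := (Submodule.mkQ_surjective _).subsingleton
    have hempty : IsEmpty {j // 0 < l j} :=
      Fintype.card_eq_zero_iff.1 ((hl 0).trans (h.rank_eq_zero le_rfl))
    have hl0 (j : J) : l j = 0 := Nat.eq_zero_of_not_pos fun hj => hempty.elim ⟨j, hj⟩
    refine ⟨0, ⟨Subsingleton.elim _ _, fun α => iff_of_true (Subsingleton.elim _ _) fun j => ?_⟩,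
      Basis.empty _, fun j => Subsingleton.elim _ _⟩
    simp [hl0]
  | succ n ih =>
    have := h.free
    have := h.free_quotient 1
    have := h.quotient.free_quotient 1
    obtain ⟨ψ, hψ⟩ := h.exists_comp_mkQ_eq
    obtain ⟨ψ', hψ'⟩ := h.quotient.exists_comp_mkQ_eq
    obtain ⟨hker, hφ'⟩ := (h.hasKernelJumps_succ_iff (ha 0)).1 hφ
    obtain ⟨x', hx', b', hb'⟩ := ih (l := fun j => l j - 1) h.quotient (fun i => ha (i + 1))
      (fun i => ha0 (i + 1)) (fun i => by simp only [← hl, Nat.lt_sub_iff_add_lt]) hφ'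
    obtain ⟨x, hx, b, hb⟩ := exists_isCyclicDecomposition_cokernel_of_quotient h.mkQ_comp
      (Submodule.mkQ_surjective _) hψ (ha 0)
      (injective_baseChange_residueField_of_ker_eq hψ (ha 0) (Submodule.mkQ_surjective _) hker)
      (h.quotient.injective fun i => ha0 (i + 1)) (p := fun j => 0 < l j)
      (fun j hj => by omega) (by rw [h.finrank_ker_mkQ, ← hl]) hx' (ha 1)
      (fun i => apply_eq_smul_of_mem_ker hψ' (b' i).2)
      (linearIndependent_tmul_basis_ker (Submodule.mkQ_surjective _) b') hb' fun j => by
        rw [prod_range_eq_ite_mul]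
        split_ifs with hj
        · rfl
        · simp [Nat.eq_zero_of_not_pos hj]
    refine ⟨x, ?_, b, hb⟩
    simpa only [← prod_range_eq_ite_mul] using hx

theorem exists_isCyclicDecomposition_iff (h : IsScalarFiltration φ a r n W)
    (ha : ∀ i, a i ∈ maximalIdeal A) (ha0 : ∀ i, a i ≠ 0) {l : J → ℕ}
    (hl : ∀ i, Fintype.card {j // i < l j} = r i) :
    (∃ x : J → M ⧸ LinearMap.range φ,
      IsCyclicDecomposition x fun j => ∏ i ∈ Finset.range (l j), a i) ↔
      HasKernelJumps (φ.baseChange (ResidueField A)) n r := by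
  refine ⟨fun ⟨_, hx⟩ => h.hasKernelJumps_of_isCyclicDecomposition ha ha0 hl hx, fun hφ => ?_⟩
  obtain ⟨x, hx, -⟩ := h.exists_isCyclicDecomposition_of_hasKernelJumps ha ha0 hl hφ
  exact ⟨x, hx⟩

end IsScalarFiltration

end Filtration

section Contraction

theorem finrank_sup_range_succ {K V : Type*} [Field K] [AddCommGroup V] [Module K V]
    [FiniteDimensional K V] {E : ℕ → Submodule K V} (hE : iSupIndep E) (k : ℕ) :
    finrank K ((Finset.range (k + 1)).sup E : Submodule K V) =
      finrank K ((Finset.range k).sup E : Submodule K V) + finrank K (E k) := by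
  have hdisj : Disjoint (E k) ((Finset.range k).sup E) := by
    rw [Finset.sup_eq_iSup]
    exact hE.disjoint_biSup (y := (Finset.range k : Set ℕ)) Finset.notMem_range_self
  rw [Finset.range_add_one, Finset.sup_insert, add_comm (finrank K _),
    ← Submodule.finrank_sup_add_finrank_inf_eq, hdisj.eq_bot, finrank_bot, add_zero]

variable {A K M : Type*} [CommRing A] [Field K] [Algebra A K] [AddCommGroup M] [Module A M]

/-- The submodule `U ∩ M` of the lattice `M`, for a subspace `U` of `K ⊗ M`; the
filtrations by free quotients arise in this way. -/
def contraction (U : Submodule K (K ⊗[A] M)) : Submodule A M :=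
  (U.restrictScalars A).comap (TensorProduct.mk A K M 1)

theorem mem_contraction {U : Submodule K (K ⊗[A] M)} {x : M} :
    x ∈ contraction U ↔ (1 : K) ⊗ₜ[A] x ∈ U :=
  Iff.rfl

theorem contraction_mono : Monotone (contraction (A := A) (K := K) (M := M)) :=
  fun _ _ h _ hx => h hx

theorem contraction_top : contraction (⊤ : Submodule K (K ⊗[A] M)) = ⊤ :=
  rfl

/-- The embedding `M / (U ∩ M) → (K ⊗ M) / U`, which exhibits the target as the localization of
the source. -/
def quotientContractionMap (U : Submodule K (K ⊗[A] M)) :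
    (M ⧸ contraction U) →ₗ[A] (K ⊗[A] M) ⧸ U :=
  (contraction U).liftQ (U.mkQ.restrictScalars A ∘ₗ TensorProduct.mk A K M 1)
    fun _ hx => (Submodule.Quotient.mk_eq_zero U).2 hx

theorem quotientContractionMap_injective (U : Submodule K (K ⊗[A] M)) :
    Function.Injective (quotientContractionMap U) := by
  refine LinearMap.ker_eq_bot.1 (Submodule.ker_liftQ_eq_bot _ _ _ fun x hx => ?_)
  exact (Submodule.Quotient.mk_eq_zero U).1 hx

variable [IsFractionRing A K]

theorem contraction_bot [Free A M] : contraction (⊥ : Submodule K (K ⊗[A] M)) = ⊥ := by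
  have hinj : Function.Injective (TensorProduct.mk A K M 1) :=
    Flat.tensorProduct_mk_injective A M K
  exact eq_bot_iff.2 fun x hx => hinj (hx.trans (map_zero _).symm)

theorem isLocalizedModule_quotientContractionMap (U : Submodule K (K ⊗[A] M)) :
    IsLocalizedModule (nonZeroDivisors A) (quotientContractionMap U) where
  map_units s := by
    have hs : IsUnit (algebraMap A K s) := IsLocalization.map_units K s
    rw [← AlgHom.commutes (Algebra.lsmul A A ((K ⊗[A] M) ⧸ U) : K →ₐ[A] _)]
    exact hs.map _
  surj y := by
    obtain ⟨y, rfl⟩ := U.mkQ_surjective y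
    obtain ⟨⟨m, s⟩, hs⟩ := IsLocalizedModule.surj (nonZeroDivisors A) (TensorProduct.mk A K M 1) y
    exact ⟨(Submodule.Quotient.mk m, s), congr(U.mkQ $hs)⟩
  exists_of_eq h := ⟨1, by rw [quotientContractionMap_injective U h]⟩

theorem finrank_quotient_contraction (U : Submodule K (K ⊗[A] M)) :
    finrank A (M ⧸ contraction U) = finrank K ((K ⊗[A] M) ⧸ U) := by
  have := isLocalizedModule_quotientContractionMap U
  rw [IsLocalization.finrank_eq K (nonZeroDivisors A) le_rfl (N := (K ⊗[A] M) ⧸ U)]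
  exact (IsLocalizedModule.finrank_eq (nonZeroDivisors A) (quotientContractionMap U) le_rfl).symm

theorem free_quotient_contraction [IsDomain A] [ValuationRing A] [Module.Finite A M]
    (U : Submodule K (K ⊗[A] M)) : Free A (M ⧸ contraction U) := by
  have : IsTorsionFree A K := inferInstance
  have : IsTorsionFree A ((K ⊗[A] M) ⧸ U) := .trans_faithfulSMul A K _
  have : IsTorsionFree A (M ⧸ contraction U) :=
    (quotientContractionMap_injective U).moduleIsTorsionFree _ (map_smul _)
  have : Flat A (M ⧸ contraction U) :=
    Flat.flat_iff_torsion_eq_bot_of_isBezout.2 (Submodule.isTorsionFree_iff_torsion_eq_bot.1 this)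
  exact free_of_flat_of_isLocalRing

theorem isScalarFiltration_contraction_sup [IsDomain A] [ValuationRing A] [Module.Finite A M]
    [Free A M] {φ : End A M} {a : ℕ → A} {n : ℕ} {E : ℕ → Submodule K (K ⊗[A] M)} (hE : iSupIndep E)
    (htop : (Finset.range n).sup E = ⊤)
    (hφ : ∀ i, ∀ x ∈ E i, φ.baseChange K x = algebraMap A K (a i) • x) :
    IsScalarFiltration φ a (fun i => finrank K (E i)) n
      fun k => contraction ((Finset.range k).sup E) where
  zero_eq_bot := by rw [Finset.range_zero, Finset.sup_empty, contraction_bot]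
  last_eq_top := by rw [htop, contraction_top]
  mono i j hij := contraction_mono (Finset.sup_mono (Finset.range_mono hij))
  free_quotient i := free_quotient_contraction _
  finrank_quotient i := by
    have hsucc := finrank_sup_range_succ hE i
    have hquot := ((Finset.range i).sup E).finrank_quotient_add_finrank
    have hquot' := ((Finset.range (i + 1)).sup E).finrank_quotient_add_finrank
    rw [finrank_quotient_contraction, finrank_quotient_contraction]
    omega
  sub_smul_mem i x hx := by
    have hstable : (Finset.range i).sup E ≤ ((Finset.range i).sup E).comap (φ.baseChange K) :=
      Finset.sup_le fun j hj y hy => by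
        rw [Submodule.mem_comap, hφ j y hy]
        exact Submodule.smul_mem _ _ (Finset.le_sup (f := E) hj hy)
    rw [mem_contraction, Finset.range_add_one, Finset.sup_insert] at hx
    obtain ⟨y, hy, z, hz, hyz⟩ := Submodule.mem_sup.1 hx
    rw [mem_contraction, TensorProduct.tmul_sub, TensorProduct.tmul_smul,
      ← LinearMap.baseChange_tmul, ← algebraMap_smul K (a i), ← hyz, map_add, smul_add, hφ i y hy,
      add_sub_add_left_eq_sub]
    exact sub_mem (hstable hz) (Submodule.smul_mem _ _ hz)

end Contraction

section Counting

theorem card_filter_le_eq_add {X : Type*} [Fintype X] (f : X → ℕ) (k : ℕ) :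
    (Finset.univ.filter fun x => k ≤ f x).card =
      (Finset.univ.filter fun x => f x = k).card +
        (Finset.univ.filter fun x => k + 1 ≤ f x).card := by
  classical
  rw [← Finset.card_union_of_disjoint (Finset.disjoint_filter.2 fun x _ hx => by omega)]
  congr 1
  ext x
  simp only [Finset.mem_filter, Finset.mem_univ, true_and, Finset.mem_union]
  omega

theorem exists_equiv_ne_zero_of_card_filter_le_eq {X Y : Type*} [Fintype X] [Fintype Y]
    {f : X → ℕ} {g : Y → ℕ}
    (h : ∀ k, 1 ≤ k → (Finset.univ.filter fun x => k ≤ f x).card =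
      (Finset.univ.filter fun y => k ≤ g y).card) :
    ∃ σ : {x // f x ≠ 0} ≃ {y // g y ≠ 0}, ∀ x, g (σ x) = f x := by
  have hfiber (k : ℕ) (hk : k ≠ 0) : Nonempty ({x // f x = k} ≃ {y // g y = k}) := by
    rw [← Fintype.card_eq, Fintype.card_subtype, Fintype.card_subtype]
    have hf := card_filter_le_eq_add f k
    have hg := card_filter_le_eq_add g k
    have hk₀ := h k (by omega)
    have hk₁ := h (k + 1) (by omega)
    omega
  have hfiber' (k : ℕ) :
      Nonempty ({x : {x // f x ≠ 0} // f x = k} ≃ {y : {y // g y ≠ 0} // g y = k}) := by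
    obtain rfl | hk := eq_or_ne k 0
    · have : IsEmpty {x : {x // f x ≠ 0} // f x = 0} := ⟨fun x => x.1.2 x.2⟩
      have : IsEmpty {y : {y // g y ≠ 0} // g y = 0} := ⟨fun y => y.1.2 y.2⟩
      exact ⟨Equiv.equivOfIsEmpty _ _⟩
    · obtain ⟨σ⟩ := hfiber k hk
      exact ⟨(Equiv.subtypeSubtypeEquivSubtype fun hx => hx.trans_ne hk).trans
        (σ.trans (Equiv.subtypeSubtypeEquivSubtype fun hy => hy.trans_ne hk).symm)⟩
  exact ⟨Equiv.ofFiberEquiv fun k => (hfiber' k).some,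
    Equiv.ofFiberEquiv_map fun k => (hfiber' k).some⟩

theorem lt_card_filter_le_iff {n : ℕ} {r : Fin n → ℕ} (hr : Antitone r) (k : ℕ) (i : Fin n) :
    (i : ℕ) < (Finset.univ.filter fun i' => k ≤ r i').card ↔ k ≤ r i := by
  constructor
  · intro hi
    by_contra! hk
    have hsub : (Finset.univ.filter fun i' => k ≤ r i') ⊆ Finset.Iio i := fun i' hi' =>
      Finset.mem_Iio.2 (lt_of_not_ge fun hle =>
        ((Finset.mem_filter.1 hi').2.trans (hr hle)).not_gt hk)
    have hcard := Finset.card_le_card hsub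
    rw [Fin.card_Iio] at hcard
    omega
  · intro hk
    have hsub : Finset.Iic i ⊆ Finset.univ.filter fun i' => k ≤ r i' := fun i' hi' =>
      Finset.mem_filter.2 ⟨Finset.mem_univ i', hk.trans (hr (Finset.mem_Iic.1 hi'))⟩
    have hcard := Finset.card_le_card hsub
    rw [Fin.card_Iic] at hcard
    omega

theorem card_lt_card_filter_le {n m : ℕ} {r : Fin n → ℕ} (hr : Antitone r) {s : ℕ → ℕ}
    (hs : ∀ i : Fin n, s i = r i) (hs0 : ∀ i, n ≤ i → s i = 0) (hm : ∀ i, s i ≤ m) (i : ℕ) :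
    Fintype.card {j : Fin m // i < (Finset.univ.filter fun i' => (j : ℕ) + 1 ≤ r i').card} =
      s i := by
  obtain hi | hi := lt_or_ge i n
  · have hlt (j : Fin m) :
        i < (Finset.univ.filter fun i' => (j : ℕ) + 1 ≤ r i').card ↔ (j : ℕ) < s i := by
      rw [show s i = r ⟨i, hi⟩ from hs ⟨i, hi⟩]
      exact lt_card_filter_le_iff hr (j + 1) ⟨i, hi⟩
    simp only [hlt]
    rw [Fintype.card_subtype, Fin.card_filter_val_lt, min_eq_right (hm i)]
  · rw [hs0 i hi, Fintype.card_eq_zero_iff]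
    exact ⟨fun j => (j.2.trans_le (card_finset_fin_le _)).not_ge hi⟩

end Counting

section Padding

theorem iSupIndep_extend_bot {T S α : Type*} [CompleteLattice α] {E : T → α} (hE : iSupIndep E)
    {g : T → S} (hg : Function.Injective g) : iSupIndep (Function.extend g E ⊥) := by
  have hrange (s : {s // Function.extend g E ⊥ s ≠ ⊥}) : ∃ t, g t = s :=
    by_contra fun hs => s.2 (Function.extend_apply' E ⊥ s.1 hs)
  choose f hf using hrange
  have hfE : E ∘ f = fun s : {s // Function.extend g E ⊥ s ≠ ⊥} => Function.extend g E ⊥ s :=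
    funext fun s => by rw [← hf s, hg.extend_apply, Function.comp_apply]
  rw [← iSupIndep_ne_bot, ← hfE]
  exact hE.comp fun s t hst => Subtype.ext (by rw [← hf s, ← hf t, hst])

theorem sup_range_extend_bot {T α : Type*} [CompleteLattice α] (E : T → α) {g : T → ℕ}
    (hg : Function.Injective g) {n : ℕ} (hn : ∀ t, g t < n) :
    (Finset.range n).sup (Function.extend g E ⊥) = ⨆ t, E t := by
  rw [Finset.sup_eq_iSup, ← iSup_extend_bot hg]
  refine le_antisymm (iSup_mono fun i => iSup_le fun _ => le_rfl) (iSup_le fun i => ?_)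
  by_cases hi : ∃ t, g t = i
  · obtain ⟨t, rfl⟩ := hi
    exact le_iSup₂_of_le (g t) (Finset.mem_range.2 (hn t)) le_rfl
  · rw [Function.extend_apply' _ _ _ hi]
    exact bot_le

variable {A K M T : Type*} [CommRing A] [IsDomain A] [ValuationRing A] [Field K] [Algebra A K]
  [IsFractionRing A K] [AddCommGroup M] [Module A M] [Module.Finite A M] [Free A M]

theorem exists_isScalarFiltration_extend {φ : End A M} {E : T → Submodule K (K ⊗[A] M)} {a : T → A}
    (hE : iSupIndep E) (htop : ⨆ t, E t = ⊤)
    (hφ : ∀ t, ∀ x ∈ E t, φ.baseChange K x = algebraMap A K (a t) • x)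
    {g : T → ℕ} (hg : Function.Injective g) {n : ℕ} (hn : ∀ t, g t < n) (ϖ : ℕ → A) :
    ∃ W, IsScalarFiltration φ (Function.extend g a ϖ)
      (Function.extend g (fun t => finrank K (E t)) 0) n W := by
  have hrank (i : ℕ) : finrank K (Function.extend g E ⊥ i : Submodule K _) =
      Function.extend g (fun t => finrank K (E t)) 0 i := by
    by_cases hi : ∃ t, g t = i
    · obtain ⟨t, rfl⟩ := hi
      rw [hg.extend_apply, hg.extend_apply]
    · rw [Function.extend_apply' _ _ _ hi, Function.extend_apply' _ _ _ hi]
      exact finrank_bot K _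
  refine ⟨_, funext hrank ▸ isScalarFiltration_contraction_sup (iSupIndep_extend_bot hE hg)
    ((sup_range_extend_bot E hg hn).trans htop) fun i x hx => ?_⟩
  by_cases hi : ∃ t, g t = i
  · obtain ⟨t, rfl⟩ := hi
    rw [hg.extend_apply] at hx ⊢
    exact hφ t x hx
  · rw [Function.extend_apply' _ _ _ hi] at hx
    rw [(Submodule.mem_bot K).1 hx, map_zero, smul_zero]

theorem exists_isScalarFiltration_of_card_filter_le_eq [Fintype T] {φ : End A M}
    {E : T → Submodule K (K ⊗[A] M)} {a : T → A} (hE : iSupIndep E) (htop : ⨆ t, E t = ⊤)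
    (hφ : ∀ t, ∀ x ∈ E t, φ.baseChange K x = algebraMap A K (a t) • x) {n : ℕ} {r : Fin n → ℕ}
    (hr : ∀ k, 1 ≤ k → (Finset.univ.filter fun i => k ≤ r i).card =
      (Finset.univ.filter fun t => k ≤ finrank K (E t)).card) (ϖ : A) :
    ∃ (b : ℕ → A) (ρ : ℕ → ℕ) (W : ℕ → Submodule A M), IsScalarFiltration φ b ρ n W ∧
      (∀ i : Fin n, ρ i = r i) ∧ ∀ i, b i ∈ Set.range a ∨ ρ i = 0 ∧ b i = ϖ := by
  obtain ⟨σ, hσ⟩ := exists_equiv_ne_zero_of_card_filter_le_eq hr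
  let g : {t // finrank K (E t) ≠ 0} → ℕ := fun t => ((σ.symm t).1 : ℕ)
  have hg : Function.Injective g :=
    Fin.val_injective.comp (Subtype.val_injective.comp σ.symm.injective)
  have htop' : ⨆ t : {t // finrank K (E t) ≠ 0}, E t = ⊤ := by
    rw [← htop, ← iSup_ne_bot_subtype E, iSup_subtype, iSup_subtype]
    simp only [Ne, Submodule.finrank_eq_zero]
  obtain ⟨W, hW⟩ := exists_isScalarFiltration_extend (hE.comp Subtype.val_injective) htop'
    (fun t => hφ t) hg (fun t => (σ.symm t).1.2) fun _ => ϖ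
  refine ⟨_, _, W, hW, fun i => ?_, fun i => ?_⟩
  · by_cases hi : r i = 0
    · rw [Function.extend_apply', hi, Pi.zero_apply]
      rintro ⟨t, ht⟩
      exact (σ.symm t).2 (Fin.val_injective ht ▸ hi)
    · rw [← hσ ⟨i, hi⟩, show (i : ℕ) = g (σ ⟨i, hi⟩) by simp [g], hg.extend_apply]
      rfl
  · by_cases hi : ∃ t, g t = i
    · obtain ⟨t, rfl⟩ := hi
      exact .inl ⟨t, (hg.extend_apply (fun t => a t) _ t).symm⟩
    · exact .inr ⟨Function.extend_apply' _ _ _ hi, Function.extend_apply' _ _ _ hi⟩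

end Padding

section Valuation

variable {K : Type*} [Field K] {v : K → ℝ}

theorem valuation_prod (hv : ∀ x y : K, x ≠ 0 → y ≠ 0 → v (x * y) = v x + v y) {X : Type*}
    {s : Finset X} {f : X → K} (hf : ∀ i ∈ s, f i ≠ 0) : v (∏ i ∈ s, f i) = ∑ i ∈ s, v (f i) := by
  classical
  induction s using Finset.induction_on with
  | empty =>
    have hone := hv 1 1 one_ne_zero one_ne_zero
    rw [mul_one] at hone
    rw [Finset.prod_empty, Finset.sum_empty]
    linarith
  | insert i s hi ih =>
    rw [Finset.forall_mem_insert] at hf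
    rw [Finset.prod_insert hi, Finset.sum_insert hi, hv _ _ hf.1 (Finset.prod_ne_zero_iff.2 hf.2),
      ih hf.2]

variable {A : ValuationSubring K}

theorem dvd_iff_valuation_le (hv : ∀ x y : K, x ≠ 0 → y ≠ 0 → v (x * y) = v x + v y)
    (hA : ∀ x : K, x ≠ 0 → (x ∈ A ↔ 0 ≤ v x)) {x y : A} (hx : x ≠ 0) (hy : y ≠ 0) :
    x ∣ y ↔ v x ≤ v y := by
  have hxK : (x : K) ≠ 0 := Subtype.coe_ne_coe.2 hx
  have hyK : (y : K) ≠ 0 := Subtype.coe_ne_coe.2 hy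
  have hmul : (y : K) = x * (y / x) := (mul_div_cancel₀ _ hxK).symm
  have hquot : v (y : K) = v x + v (y / x : K) := by
    conv_lhs => rw [hmul, hv _ _ hxK (div_ne_zero hyK hxK)]
  rw [hquot, le_add_iff_nonneg_right, ← hA _ (div_ne_zero hyK hxK)]
  constructor
  · rintro ⟨z, rfl⟩
    rw [MulMemClass.coe_mul, mul_div_cancel_left₀ _ hxK]
    exact z.2
  · exact fun hz => ⟨⟨_, hz⟩, Subtype.ext hmul⟩

theorem associated_iff_valuation_eq (hv : ∀ x y : K, x ≠ 0 → y ≠ 0 → v (x * y) = v x + v y)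
    (hA : ∀ x : K, x ≠ 0 → (x ∈ A ↔ 0 ≤ v x)) {x y : A} (hx : x ≠ 0) (hy : y ≠ 0) :
    Associated x y ↔ v x = v y := by
  rw [← dvd_dvd_iff_associated, dvd_iff_valuation_le hv hA hx hy, dvd_iff_valuation_le hv hA hy hx,
    le_antisymm_iff]

theorem mem_maximalIdeal_iff_valuation_pos
    (hv : ∀ x y : K, x ≠ 0 → y ≠ 0 → v (x * y) = v x + v y)
    (hA : ∀ x : K, x ≠ 0 → (x ∈ A ↔ 0 ≤ v x)) {x : A} (hx : x ≠ 0) :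
    x ∈ maximalIdeal A ↔ 0 < v x := by
  have hone : v ((1 : A) : K) = 0 := by simpa using valuation_prod hv (s := ∅) (f := (1 : K → K))
  rw [mem_maximalIdeal, mem_nonunits_iff, isUnit_iff_dvd_one,
    dvd_iff_valuation_le hv hA hx one_ne_zero, hone, not_le]

theorem IsScalarFiltration.exists_valuation_eq_iff_hasKernelJumps
    (hv : ∀ x y : K, x ≠ 0 → y ≠ 0 → v (x * y) = v x + v y)
    (hA : ∀ x : K, x ≠ 0 → (x ∈ A ↔ 0 ≤ v x)) {M J : Type*} [AddCommGroup M] [Module A M]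
    [Module.Finite A M] [Fintype J] {φ : End A M} {a : ℕ → A} {r : ℕ → ℕ} {n : ℕ}
    {W : ℕ → Submodule A M} (h : IsScalarFiltration φ a r n W) (ha0 : ∀ i, a i ≠ 0)
    (ha : ∀ i, 0 < v (a i)) {γ : ℝ} (hγ : ∀ i, r i ≠ 0 → v (a i) = γ) {l : J → ℕ}
    (hl : ∀ i, Fintype.card {j // i < l j} = r i) :
    (∃ c : J → A, (∀ j, c j ≠ 0) ∧
        Nonempty ((M ⧸ LinearMap.range φ) ≃ₗ[A] ((j : J) → A ⧸ Ideal.span {c j})) ∧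
        ∀ j, v (c j) = l j * γ) ↔
      HasKernelJumps (φ.baseChange (ResidueField A)) n r := by
  have hprod (j : J) : v (∏ i ∈ Finset.range (l j), a i : A) = l j * γ := by
    have hterm (i : ℕ) (hi : i ∈ Finset.range (l j)) : v (a i) = γ := by
      have : Nonempty {j // i < l j} := ⟨j, Finset.mem_range.1 hi⟩
      exact hγ i (hl i ▸ Fintype.card_ne_zero)
    rw [SubmonoidClass.coe_finsetProd, valuation_prod hv fun i _ => Subtype.coe_ne_coe.2 (ha0 i),
      Finset.sum_congr rfl hterm, Finset.sum_const, Finset.card_range, nsmul_eq_mul]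
  have hprod0 (j : J) : ∏ i ∈ Finset.range (l j), a i ≠ 0 :=
    Finset.prod_ne_zero_iff.2 fun i _ => ha0 i
  rw [← h.exists_isCyclicDecomposition_iff
    (fun i => (mem_maximalIdeal_iff_valuation_pos hv hA (ha0 i)).2 (ha i)) ha0 hl]
  constructor
  · rintro ⟨c, hc0, hc, hcv⟩
    obtain ⟨x, hx⟩ := IsCyclicDecomposition.nonempty_linearEquiv_iff.1 hc
    exact ⟨x, hx.congr fun j => (associated_iff_valuation_eq hv hA (hc0 j) (hprod0 j)).2
      ((hcv j).trans (hprod j).symm)⟩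
  · rintro ⟨x, hx⟩
    exact ⟨_, hprod0, IsCyclicDecomposition.nonempty_linearEquiv_iff.2 ⟨x, hx⟩, hprod⟩

end Valuation

theorem statement7_general {K : Type*} [Field K] (v : K → ℝ)
    (hv_mul : ∀ x y : K, x ≠ 0 → y ≠ 0 → v (x * y) = v x + v y) (hv_pos : ∃ x : K, x ≠ 0 ∧ 0 < v x)
    (A : ValuationSubring K) (hA : ∀ x : K, x ≠ 0 → (x ∈ A ↔ 0 ≤ v x))
    {M : Type*} [AddCommGroup M] [Module A M] [Free A M] [Module.Finite A M] (φ : End A M)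
    {T : Type*} [Fintype T] [DecidableEq T] (a : T → A) (ha0 : ∀ t, a t ≠ 0) (γ : ℝ) (hγ : 0 < γ)
    (ha : ∀ t, v (a t) = γ) (E : T → Submodule K (K ⊗[A] M)) (hE : DirectSum.IsInternal E)
    (hφ : ∀ t, ∀ x ∈ E t, φ.baseChange K x = (a t : K) • x) (n : ℕ) (r : Fin n → ℕ)
    (hr_anti : Antitone r)
    (hr_count : ∀ k, 1 ≤ k → (Finset.univ.filter fun i => k ≤ r i).card =
      (Finset.univ.filter fun t => k ≤ finrank K (E t)).card) :
    (∃ c : Fin (finrank A M) → A, (∀ j, c j ≠ 0) ∧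
        Nonempty ((M ⧸ LinearMap.range φ) ≃ₗ[A] ((j : Fin (finrank A M)) → A ⧸ Ideal.span {c j})) ∧
        ∀ j, v (c j) = (Finset.univ.filter fun i => (j : ℕ) + 1 ≤ r i).card * γ) ↔
      ∀ i : Fin n,
        finrank (ResidueField A) (LinearMap.ker (φ.baseChange (ResidueField A) ^ ((i : ℕ) + 1))) =
          finrank (ResidueField A) (LinearMap.ker (φ.baseChange (ResidueField A) ^ (i : ℕ))) +
            r i := by
  obtain ⟨ϖ, hϖ0, hϖ⟩ := hv_pos
  obtain ⟨b, ρ, W, hW, hρ, hb⟩ := exists_isScalarFiltration_of_card_filter_le_eq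
    hE.submodule_iSupIndep hE.submodule_iSup_eq_top hφ hr_count ⟨ϖ, (hA ϖ hϖ0).2 hϖ.le⟩
  have hb0 (i : ℕ) : b i ≠ 0 := by
    obtain ⟨t, ht⟩ | ⟨-, hi⟩ := hb i
    · exact ht ▸ ha0 t
    · exact hi ▸ Subtype.coe_ne_coe.1 hϖ0
  have hb_pos (i : ℕ) : 0 < v (b i) := by
    obtain ⟨t, ht⟩ | ⟨-, hi⟩ := hb i
    · rwa [← ht, ha]
    · rwa [hi]
  have hbγ (i : ℕ) (hi : ρ i ≠ 0) : v (b i) = γ := by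
    obtain ⟨t, ht⟩ := (hb i).resolve_right fun h => hi h.1
    rw [← ht, ha]
  rw [hW.exists_valuation_eq_iff_hasKernelJumps hv_mul hA hb0 hb_pos hbγ
    (card_lt_card_filter_le hr_anti hρ (fun _ => hW.rank_eq_zero) hW.rank_le_finrank),
    HasKernelJumps, Fin.forall_iff]
  exact forall₂_congr fun i hi => by rw [← hρ ⟨i, hi⟩]

section Embeddings

variable {p : ℕ} [Fact p.Prime] {F : Type*} [Field F] [Algebra ℚ_[p] F] {OF : Subring F}

variable (p F) in
theorem natCast_prime_ne_zero : (p : F) ≠ 0 := by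
  rw [← map_natCast (algebraMap ℚ_[p] F), map_ne_zero, Nat.cast_ne_zero]
  exact NeZero.ne p

theorem uniformiser_ne_zero {π : OF} {e : ℕ} (he : e ≠ 0)
    (hπe : ∃ u : OFˣ, (π : F) ^ e = (p : F) * ((u : OF) : F)) : (π : F) ≠ 0 := by
  obtain ⟨u, hu⟩ := hπe
  have hmul : (p : F) * ((u : OF) : F) ≠ 0 :=
    mul_ne_zero (natCast_prime_ne_zero p F) (Subtype.coe_ne_coe.2 u.ne_zero)
  exact ne_zero_pow he (hu ▸ hmul)

theorem apply_of_mem_eigenspaceOF {K : Type*} [Field K] [Algebra ℚ_[p] K] {A : ValuationSubring K}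
    {M : Type*} [AddCommGroup M] [Module A M] {ι : OF →+* End A M} {τ : F →ₐ[ℚ_[p]] K}
    {x : K ⊗[A] M} (hx : x ∈ eigenspaceOF A OF ι τ) (a : OF) :
    (ι a).baseChange K x = τ a • x :=
  sub_eq_zero.1 ((Submodule.mem_iInf _).1 hx a)

end Embeddings

theorem statement7
    -- the complete rank-one valued field `(K, v)` extending `ℚ_p`, with valuation ring `O_K = A`
    -- and residue field `κ`
    {p : ℕ} [Fact p.Prime] {K : Type*} [Field K] [Algebra ℚ_[p] K]
    (v : K → ℝ)
    (hv_mul : ∀ x y : K, x ≠ 0 → y ≠ 0 → v (x * y) = v x + v y)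
    (hv_add : ∀ x y : K, x ≠ 0 → y ≠ 0 → x + y ≠ 0 → min (v x) (v y) ≤ v (x + y))
    (hv_p : v (p : K) = 1)
    (A : ValuationSubring K)
    (hA : ∀ x : K, x ≠ 0 → (x ∈ A ↔ 0 ≤ v x))
    -- the finite extension `F` of `ℚ_p`, its ring of integers `O_F`, uniformiser `π`,
    -- ramification index `e`; `K` contains a Galois closure of `F|ℚ_p`
    {F : Type*} [Field F] [Algebra ℚ_[p] F] [FiniteDimensional ℚ_[p] F]
    [Fintype (F →ₐ[ℚ_[p]] K)] [DecidableEq (F →ₐ[ℚ_[p]] K)]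
    (OF : Subring F) (π : OF) (e : ℕ) (he : 0 < e)
    (hπe : ∃ u : OFˣ, (π : F) ^ e = (p : F) * ((u : OF) : F))
    (hτO : ∀ (τ : F →ₐ[ℚ_[p]] K) (x : OF), τ (x : F) ∈ A)
    (hτπ : ∀ τ : F →ₐ[ℚ_[p]] K, v (τ (π : F)) = 1 / e)
    -- the finitely generated free `O_K`-module `M` of rank `r`, with `O_F`-action `ι`,
    -- and the eigenspace decomposition `M_K = ⊕_τ M_{K,τ}`
    {M : Type*} [AddCommGroup M] [Module A M] [Module.Free A M] [Module.Finite A M]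
    (ι : OF →+* Module.End A M)
    (hdec : DirectSum.IsInternal (fun τ : F →ₐ[ℚ_[p]] K => eigenspaceOF A OF ι τ))
    (r : ℕ) (hrank : Module.finrank A M = r)
    -- at most `e` of the embeddings `τ` satisfy `M_{K,τ} ≠ 0`
    (hsupp : ∃ T : Finset (F →ₐ[ℚ_[p]] K), T.card ≤ e ∧
      ∀ τ ∉ T, eigenspaceOF A OF ι τ = ⊥)
    -- `r_1 ≥ … ≥ r_e ≥ 0` is the decreasing rearrangement of `(r_τ)_τ`, padded with zeros
    (r' : Fin e → ℕ)
    (hr'anti : ∀ i j : Fin e, i ≤ j → r' j ≤ r' i)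
    (hr'count : ∀ k : ℕ, 1 ≤ k →
      (Finset.univ.filter fun i : Fin e => k ≤ r' i).card
        = (Finset.univ.filter fun τ : F →ₐ[ℚ_[p]] K =>
            k ≤ Module.finrank K (eigenspaceOF A OF ι τ)).card)
    (hrsum : r = ∑ i, r' i) :
    -- (i) the elementary divisors `c_j` of `M/ι(π)(M)` satisfy
    --     `v(c_j) = (1/e)·#{1 ≤ i ≤ e : r_i ≥ j}` for all `1 ≤ j ≤ r`, if and only if
    -- (ii) `dim_κ (M̄[π^j]/M̄[π^{j-1}]) = r_j` for all `1 ≤ j ≤ e`, where `M̄ = M ⊗ κ`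
    ((∃ c : Fin r → A, (∀ j, c j ≠ 0) ∧
        Nonempty ((M ⧸ LinearMap.range (ι π)) ≃ₗ[A] ((j : Fin r) → A ⧸ Ideal.span {c j})) ∧
        ∀ j : Fin r, v ((c j : A) : K)
          = ((Finset.univ.filter fun i : Fin e => (j : ℕ) + 1 ≤ r' i).card : ℝ) / e)
      ↔
      (∀ i : Fin e,
        Module.finrank (IsLocalRing.ResidueField A)
          (LinearMap.ker ((ι π).baseChange (IsLocalRing.ResidueField A) ^ ((i : ℕ) + 1)))
        = Module.finrank (IsLocalRing.ResidueField A)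
            (LinearMap.ker ((ι π).baseChange (IsLocalRing.ResidueField A) ^ (i : ℕ)))
          + r' i)) := by
  subst hrank
  simpa only [mul_one_div] using statement7_general v hv_mul
    ⟨p, natCast_prime_ne_zero p K, hv_p ▸ one_pos⟩ A hA (ι π) (fun τ => ⟨τ π, hτO τ π⟩)
    (fun τ => Subtype.coe_ne_coe.1 ((map_ne_zero τ).2 (uniformiser_ne_zero he.ne' hπe)))
    (1 / e) (one_div_pos.2 (Nat.cast_pos.2 he)) hτπ (eigenspaceOF A OF ι) hdec
    (fun τ x hx => apply_of_mem_eigenspaceOF hx π) e r' hr'anti hr'count
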